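/- For all integers d, k with 1 ≤ k ≤ d and d ≥ 2, setting w = (2k−1)(2(d−k)+1), for all n ≥ 1 the number of (d,k)-fixed polyominoids of k-area n satisfies c^XD_{(d,k),n} ≤ C(d,k) · (w^w/(w−1)^{w−1})^{n−1}, where C(d,k) is the binomial coefficient d choose k. -/

import Mathlib

/-!
Explore a connected set `M` of `m + 1` vertices of a graph outwards from a root, deciding for one
accepted vertex at a time which of its still undecided neighbours lie in `M`. If every accepted
vertex leaves at most `w` neighbours undecided when it is accepted, all the answers together select
`m` of at most `w * m` slots, so there are at most `(w * m).choose m` such sets `M`.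

For `k`-faces, the vertices accepted from `x` share an edge `e` with `x`, and all faces around `e`
are decided with the neighbours of `x`; only the other `2 * k - 1` edges remain, each with
`2 * (d - k) + 1` further faces. As root take the face whose centre is lexicographically least:
by central symmetry at least half of its neighbours are smaller, hence not in `M`.
-/

open Filter

/-- A `k`-face of the hypercubic lattice `ℤ^d`: an orientation set `S ⊆ {1,…,d}`
together with a base vertex `v ∈ ℤ^d`. -/
abbrev Face (d : ℕ) := Finset (Fin d) × (Fin d → ℤ)

/-- The boundary `(k-1)`-edges of a `k`-face `(S, v)`: the `(k-1)`-faces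
`(S \ {i}, v)` and `(S \ {i}, v + e_i)` for `i ∈ S`. -/
def faceEdges {d : ℕ} (f : Face d) : Finset (Face d) :=
  f.1.biUnion fun i =>
    {(f.1.erase i, f.2), (f.1.erase i, f.2 + Pi.single i 1)}

/-- Two faces are adjacent if they are distinct and share a common boundary edge. -/
def FaceAdj {d : ℕ} (f g : Face d) : Prop :=
  f ≠ g ∧ ∃ e, e ∈ faceEdges f ∧ e ∈ faceEdges g

/-- A set of faces is connected with respect to adjacency. -/
def ConnectedFaces {d : ℕ} (M : Finset (Face d)) : Prop :=
  ∀ f ∈ M, ∀ g ∈ M, Relation.ReflTransGen (fun a b => a ∈ M ∧ b ∈ M ∧ FaceAdj a b) f g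

/-- A `(d,k)`-self-avoiding manifold of `k`-area `n`: a connected set of `n` `k`-faces
such that every `(k-1)`-edge bounds at most two of its `k`-faces. -/
def IsSAM (d k n : ℕ) (M : Finset (Face d)) : Prop :=
  M.card = n ∧ (∀ f ∈ M, f.1.card = k) ∧ ConnectedFaces M ∧
    ∀ e : Face d, (M.filter fun f => e ∈ faceEdges f).card ≤ 2

/-- A closed `(d,k)`-self-avoiding manifold: every boundary edge of every face
is shared by exactly two faces. -/
def IsClosedSAM (d k n : ℕ) (M : Finset (Face d)) : Prop :=
  IsSAM d k n M ∧ ∀ f ∈ M, ∀ e ∈ faceEdges f,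
    (M.filter fun g => e ∈ faceEdges g).card = 2

/-- A `(d,k)`-fixed polyominoid of `k`-area `n`: a connected set of `n` `k`-faces. -/
def IsXD (d k n : ℕ) (M : Finset (Face d)) : Prop :=
  M.card = n ∧ (∀ f ∈ M, f.1.card = k) ∧ ConnectedFaces M

/-- Translation of a face by a lattice vector. -/
def translateFace {d : ℕ} (t : Fin d → ℤ) (f : Face d) : Face d := (f.1, f.2 + t)

/-- Two sets of faces are translation-equivalent. -/
def TransEquiv {d : ℕ} (A B : Finset (Face d)) : Prop :=
  ∃ t : Fin d → ℤ, A.image (translateFace t) = B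

/-- The number of `(d,k)`-self-avoiding manifolds of `k`-area `n`, up to translation. -/
noncomputable def samCount (d k n : ℕ) : ℕ :=
  Nat.card (Quot fun A B : {M : Finset (Face d) // IsSAM d k n M} =>
    TransEquiv A.val B.val)

/-- The number of closed `(d,k)`-self-avoiding manifolds of `k`-area `n`, up to
translation. -/
noncomputable def closedSamCount (d k n : ℕ) : ℕ :=
  Nat.card (Quot fun A B : {M : Finset (Face d) // IsClosedSAM d k n M} =>
    TransEquiv A.val B.val)

/-- The number of `(d,k)`-fixed polyominoids of `k`-area `n`, up to translation. -/
noncomputable def xdCount (d k n : ℕ) : ℕ :=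
  Nat.card (Quot fun A B : {M : Finset (Face d) // IsXD d k n M} =>
    TransEquiv A.val B.val)

section Counting

open Finset

theorem sum_powerset_choose_sub {α : Type*} (T : Finset α) (n r : ℕ) :
    ∑ K ∈ T.powerset with #K ≤ r, n.choose (r - #K) = (#T + n).choose r := by
  have maps_to : ∀ K ∈ T.powerset.filter (#· ≤ r), (#K, r - #K) ∈ antidiagonal r := by
    intro K hK
    exact HasAntidiagonal.mem_antidiagonal.mpr (Nat.add_sub_of_le (mem_filter.mp hK).2)
  have fiber_eq : ∀ p ∈ antidiagonal r,
      {K ∈ T.powerset.filter (#· ≤ r) | (#K, r - #K) = p} = T.powersetCard p.1 := by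
    rintro ⟨i, j⟩ hp
    ext K
    rw [HasAntidiagonal.mem_antidiagonal] at hp
    simp only [mem_filter, mem_powerset, mem_powersetCard, Prod.mk.injEq]
    grind
  rw [Nat.add_choose_eq, ← sum_fiberwise_of_maps_to maps_to]
  refine sum_congr rfl fun p hp ↦ ?_
  calc ∑ K ∈ T.powerset.filter (#· ≤ r) with (#K, r - #K) = p, n.choose (r - #K)
      = ∑ K ∈ T.powerset.filter (#· ≤ r) with (#K, r - #K) = p, n.choose p.2 :=
        sum_congr rfl fun K hK ↦ by rw [← (mem_filter.mp hK).2]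
    _ = (#T).choose p.1 * n.choose p.2 := by
        rw [sum_const, fiber_eq p hp, card_powersetCard, smul_eq_mul]

theorem choose_mul_pow_le (w m : ℕ) :
    ((w + 1) * m).choose m * (w ^ w) ^ m ≤ ((w + 1) ^ (w + 1)) ^ m := by
  have hm : m ≤ (w + 1) * m := Nat.le_mul_of_pos_left m w.succ_pos
  have hsub : (w + 1) * m - m = w * m := by rw [add_one_mul, Nat.add_sub_cancel]
  calc ((w + 1) * m).choose m * (w ^ w) ^ m
      = 1 ^ m * w ^ ((w + 1) * m - m) * ((w + 1) * m).choose m := by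
        rw [hsub, one_pow, one_mul, ← pow_mul, mul_comm]
    _ ≤ ∑ i ∈ range ((w + 1) * m + 1),
          1 ^ i * w ^ ((w + 1) * m - i) * ((w + 1) * m).choose i :=
        single_le_sum (f := fun i ↦ 1 ^ i * w ^ ((w + 1) * m - i) * ((w + 1) * m).choose i)
          (fun _ _ ↦ Nat.zero_le _) (mem_range_succ_iff.mpr hm)
    _ = ((w + 1) ^ (w + 1)) ^ m := by
        rw [← pow_mul, add_comm w 1, add_pow]
        simp only [Nat.cast_id]

theorem choose_mul_le_div_pow {w : ℕ} (hw : 0 < w) (m : ℕ) :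
    ((w * m).choose m : ℝ) ≤ ((w : ℝ) ^ w / ((w - 1 : ℕ) : ℝ) ^ (w - 1)) ^ m := by
  obtain ⟨w, rfl⟩ := Nat.exists_eq_add_one.mpr hw
  have hpos : (0 : ℝ) < (w : ℝ) ^ w := mod_cast Nat.pow_self_pos
  rw [Nat.add_sub_cancel, div_pow, le_div_iff₀ (by positivity)]
  exact_mod_cast choose_mul_pow_le w m

theorem natCard_le_of_forall_finset_card_le {α : Type*} {n : ℕ} (h : ∀ s : Finset α, #s ≤ n) :
    Nat.card α ≤ n := by
  simpa only [Nat.card, Cardinal.toNat_natCast] using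
    Cardinal.toNat_le_toNat (Cardinal.card_le_of h) Cardinal.natCast_lt_aleph0

end Counting

section Exploration

open Finset

variable {α : Type*} [DecidableEq α] {G : SimpleGraph α} [G.LocallyFinite] {w : ℕ}

theorem card_sdiff_union_add_card_inter_sdiff (M D N : Finset α) :
    #(M \ (D ∪ N)) + #(M ∩ (N \ D)) = #(M \ D) := by
  rw [← card_sdiff_add_card_inter (M \ D) N, sdiff_sdiff_left, sup_eq_union, ← inter_sdiff_assoc,
    sdiff_inter_right_comm]

/-- A state in the exploration of an unknown vertex set: `D` is the set of decided vertices, `B` the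
set of vertices accepted so far, and `A` the set of accepted vertices whose neighbours have yet to
be decided; each of these has at most `w` undecided neighbours. -/
structure IsExploration (G : SimpleGraph α) [G.LocallyFinite] (w : ℕ) (D B A : Finset α) :
    Prop where
  active_subset : A ⊆ B
  accepted_subset : B ⊆ D
  card_undecided_le : ∀ a ∈ A, #(G.neighborFinset a \ D) ≤ w
  neighborFinset_subset : ∀ b ∈ B, b ∉ A → G.neighborFinset b ⊆ D

namespace IsExploration

variable {D B A : Finset α}

theorem expand (h : IsExploration G w D B A)
    (hw : ∀ x y, G.Adj x y → #(G.neighborFinset y \ insert x (G.neighborFinset x)) ≤ w)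
    {a : α} (ha : a ∈ A) {K : Finset α} (hK : K ⊆ G.neighborFinset a) :
    IsExploration G w (D ∪ G.neighborFinset a) (B ∪ K) (A.erase a ∪ K) where
  active_subset := union_subset_union_left ((erase_subset a A).trans h.active_subset)
  accepted_subset := union_subset_union h.accepted_subset hK
  card_undecided_le b hb := by
    obtain hb | hb := mem_union.mp hb
    · exact (card_le_card (sdiff_subset_sdiff Subset.rfl subset_union_left)).trans
        (h.card_undecided_le b (mem_of_mem_erase hb))
    · have haD : a ∈ D := h.accepted_subset (h.active_subset ha)
      have hadj : G.Adj a b := (G.mem_neighborFinset a b).mp (hK hb)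
      refine (card_le_card (sdiff_subset_sdiff Subset.rfl ?_)).trans (hw a b hadj)
      exact insert_subset (mem_union_left _ haD) subset_union_right
  neighborFinset_subset b hb hbA := by
    simp only [mem_union, mem_erase, not_or, not_and] at hb hbA
    by_cases hba : b = a
    · exact hba ▸ subset_union_right
    · exact (h.neighborFinset_subset b (hb.resolve_right hbA.2) (hbA.1 hba)).trans
        subset_union_left

theorem subset_decided (h : IsExploration G w D B ∅) (hB : B.Nonempty) {M : Finset α}
    (hM : (G.induce (M : Set α)).Preconnected) (hMB : M ∩ D = B) : M ⊆ D := by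
  intro v hv
  by_contra hvD
  obtain ⟨u, hu⟩ := hB
  have huM : u ∈ M := mem_of_mem_inter_left (hMB ▸ hu)
  obtain ⟨p⟩ := hM ⟨u, huM⟩ ⟨v, hv⟩
  obtain ⟨⟨⟨x, y⟩, hxy⟩, -, hx, hy⟩ :=
    p.exists_boundary_dart {z | z.1 ∈ D} (h.accepted_subset hu) hvD
  have hxB : x.1 ∈ B := hMB ▸ mem_inter_of_mem x.2 hx
  exact hy (h.neighborFinset_subset x hxB (notMem_empty _) ((G.mem_neighborFinset _ _).mpr hxy))

theorem card_le_choose_of_terminal (h : IsExploration G w D B A) (hB : B.Nonempty) {r : ℕ}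
    (hend : r = 0 ∨ A = ∅) {𝓜 : Finset (Finset α)}
    (hconn : ∀ M ∈ 𝓜, (G.induce (M : Set α)).Preconnected)
    (htrace : ∀ M ∈ 𝓜, M ∩ D = B) (hcard : ∀ M ∈ 𝓜, #(M \ D) = r) (n : ℕ) :
    #𝓜 ≤ n.choose r := by
  have hsub : ∀ M ∈ 𝓜, M ⊆ D := by
    intro M hM
    obtain rfl | rfl := hend
    · exact sdiff_eq_empty_iff_subset.mp (card_eq_zero.mp (hcard M hM))
    · exact h.subset_decided hB (hconn M hM) (htrace M hM)
  have heq : ∀ M ∈ 𝓜, M = B := fun M hM ↦ by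
    rw [← htrace M hM, inter_eq_left.mpr (hsub M hM)]
  obtain rfl | ⟨M, hM⟩ := 𝓜.eq_empty_or_nonempty
  · exact Nat.zero_le _
  · have hr : r = 0 := by rw [← hcard M hM, sdiff_eq_empty_iff_subset.mpr (hsub M hM), card_empty]
    rw [hr, Nat.choose_zero_right]
    exact card_le_one.mpr fun M₁ h₁ M₂ h₂ ↦ (heq M₁ h₁).trans (heq M₂ h₂).symm

theorem card_le_choose
    (hw : ∀ x y, G.Adj x y → #(G.neighborFinset y \ insert x (G.neighborFinset x)) ≤ w)
    {l r : ℕ} (h : IsExploration G w D B A) (hB : B.Nonempty) (hl : #A + r ≤ l + 1)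
    {𝓜 : Finset (Finset α)} (hconn : ∀ M ∈ 𝓜, (G.induce (M : Set α)).Preconnected)
    (htrace : ∀ M ∈ 𝓜, M ∩ D = B) (hcard : ∀ M ∈ 𝓜, #(M \ D) = r) :
    #𝓜 ≤ (w * l).choose r := by
  induction l generalizing D B A r 𝓜 with
  | zero =>
    have hend : r = 0 ∨ A = ∅ := by rw [← card_eq_zero (s := A)]; omega
    exact h.card_le_choose_of_terminal hB hend hconn htrace hcard (w * 0)
  | succ l ih =>
    obtain rfl | ⟨a, ha⟩ := A.eq_empty_or_nonempty
    · exact h.card_le_choose_of_terminal hB (.inr rfl) hconn htrace hcard _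
    set T := G.neighborFinset a \ D with hT
    have maps_to : ∀ M ∈ 𝓜, M ∩ T ∈ T.powerset.filter (#· ≤ r) := by
      intro M hM
      have hle := card_sdiff_union_add_card_inter_sdiff M D (G.neighborFinset a)
      rw [hcard M hM, ← hT] at hle
      exact mem_filter.mpr ⟨mem_powerset.mpr inter_subset_right, by omega⟩
    have fiber_le : ∀ K ∈ T.powerset.filter (#· ≤ r),
        #{M ∈ 𝓜 | M ∩ T = K} ≤ (w * l).choose (r - #K) := by
      intro K hK
      obtain ⟨hKT, hKr⟩ := mem_filter.mp hK
      rw [mem_powerset] at hKT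
      refine ih (h.expand hw ha (hKT.trans sdiff_subset)) (hB.mono subset_union_left) ?_ ?_ ?_ ?_
      · have := card_union_le (A.erase a) K
        have := card_erase_add_one ha
        omega
      · exact fun M hM ↦ hconn M (mem_filter.mp hM).1
      · intro M hM
        obtain ⟨hM𝓜, rfl⟩ := mem_filter.mp hM
        rw [← htrace M hM𝓜, hT, ← inter_union_distrib_left, union_sdiff_self_eq_union]
      · intro M hM
        obtain ⟨hM𝓜, rfl⟩ := mem_filter.mp hM
        have := card_sdiff_union_add_card_inter_sdiff M D (G.neighborFinset a)
        rw [hcard M hM𝓜, ← hT] at this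
        omega
    calc #𝓜 = ∑ K ∈ T.powerset with #K ≤ r, #{M ∈ 𝓜 | M ∩ T = K} :=
          card_eq_sum_card_fiberwise maps_to
      _ ≤ ∑ K ∈ T.powerset with #K ≤ r, (w * l).choose (r - #K) := sum_le_sum fiber_le
      _ = (#T + w * l).choose r := sum_powerset_choose_sub T (w * l) r
      _ ≤ (w * (l + 1)).choose r := by
          refine Nat.choose_le_choose r ?_
          have := h.card_undecided_le a ha
          linarith

end IsExploration

theorem card_connected_le_choose
    (hw : ∀ x y, G.Adj x y → #(G.neighborFinset y \ insert x (G.neighborFinset x)) ≤ w)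
    {D : Finset α} {root : α} (hroot : root ∈ D) (hD : #(G.neighborFinset root \ D) ≤ w) {m : ℕ}
    {𝓜 : Finset (Finset α)} (hconn : ∀ M ∈ 𝓜, (G.induce (M : Set α)).Preconnected)
    (htrace : ∀ M ∈ 𝓜, M ∩ D = {root}) (hcard : ∀ M ∈ 𝓜, #M = m + 1) :
    #𝓜 ≤ (w * m).choose m := by
  have start : IsExploration G w D {root} {root} :=
    { active_subset := Subset.rfl
      accepted_subset := singleton_subset_iff.mpr hroot
      card_undecided_le := fun a ha ↦ mem_singleton.mp ha ▸ hD
      neighborFinset_subset := fun b hb hbA ↦ absurd hb hbA }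
  refine start.card_le_choose hw (singleton_nonempty root) ?_ hconn htrace fun M hM ↦ ?_
  · rw [card_singleton, add_comm]
  · rw [card_sdiff, inter_comm, htrace M hM, hcard M hM, card_singleton, Nat.add_sub_cancel]

end Exploration

section Faces

open Finset

variable {d k : ℕ}

/-- Twice the centre of a face. The coordinates are ordered lexicographically. -/
def doubledCenter (f : Face d) : Lex (Fin d → ℤ) :=
  toLex fun i ↦ 2 * f.2 i + if i ∈ f.1 then 1 else 0

theorem doubledCenter_apply (f : Face d) (i : Fin d) :
    ofLex (doubledCenter f) i = 2 * f.2 i + if i ∈ f.1 then 1 else 0 :=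
  rfl

theorem doubledCenter_injective : Function.Injective (doubledCenter (d := d)) := by
  rintro ⟨S, v⟩ ⟨T, u⟩ h
  have coord_eq (i : Fin d) :
      2 * v i + (if i ∈ S then 1 else 0) = 2 * u i + if i ∈ T then 1 else 0 :=
    congrFun (toLex.injective h) i
  refine Prod.ext (Finset.ext fun i ↦ ?_) (funext fun i ↦ ?_) <;> grind

theorem doubledCenter_translateFace (t : Fin d → ℤ) (f : Face d) :
    doubledCenter (translateFace t f) = doubledCenter f + toLex ((2 : ℤ) • t) := by
  refine ofLex.injective (funext fun i ↦ ?_)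
  simp only [doubledCenter_apply, translateFace, ofLex_add, ofLex_toLex, Pi.add_apply,
    Pi.smul_apply, smul_eq_mul]
  ring

theorem mem_faceEdges {e f : Face d} : e ∈ faceEdges f ↔
    ∃ i ∈ f.1, e = (f.1.erase i, f.2) ∨ e = (f.1.erase i, f.2 + Pi.single i 1) := by
  simp only [faceEdges, mem_biUnion, mem_insert, mem_singleton]

theorem mem_faceEdges_iff_doubledCenter {e f : Face d} : e ∈ faceEdges f ↔
    ∃ i ∈ f.1, doubledCenter e = doubledCenter f - toLex (Pi.single i 1) ∨
      doubledCenter e = doubledCenter f + toLex (Pi.single i 1) := by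
  have lower {i : Fin d} (hi : i ∈ f.1) :
      doubledCenter (f.1.erase i, f.2) = doubledCenter f - toLex (Pi.single i 1) := by
    refine ofLex.injective (funext fun j ↦ ?_)
    simp only [doubledCenter_apply, ofLex_sub, ofLex_toLex, Pi.sub_apply, Pi.single_apply]
    grind
  have upper {i : Fin d} (hi : i ∈ f.1) : doubledCenter (f.1.erase i, f.2 + Pi.single i 1) =
      doubledCenter f + toLex (Pi.single i 1) := by
    refine ofLex.injective (funext fun j ↦ ?_)
    simp only [doubledCenter_apply, ofLex_add, ofLex_toLex, Pi.add_apply, Pi.single_apply]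
    grind
  rw [mem_faceEdges]
  refine exists_congr fun i ↦ and_congr_right fun hi ↦ ?_
  rw [← lower hi, ← upper hi, doubledCenter_injective.eq_iff, doubledCenter_injective.eq_iff]

theorem card_faceEdges_le (f : Face d) : #(faceEdges f) ≤ 2 * #f.1 := by
  rw [mul_comm]
  exact card_biUnion_le_card_mul _ _ _ fun _ _ ↦ card_le_two

theorem card_add_one_of_mem_faceEdges {e f : Face d} (he : e ∈ faceEdges f) :
    #e.1 + 1 = #f.1 := by
  obtain ⟨i, hi, rfl | rfl⟩ := mem_faceEdges.mp he <;> exact card_erase_add_one hi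

/-- The faces of one dimension more that have `e` as a boundary edge. -/
def faceCofaces (e : Face d) : Finset (Face d) :=
  e.1ᶜ.biUnion fun j ↦ {(insert j e.1, e.2), (insert j e.1, e.2 - Pi.single j 1)}

theorem mem_faceCofaces_of_mem_faceEdges {e f : Face d} (he : e ∈ faceEdges f) :
    f ∈ faceCofaces e := by
  simp only [faceCofaces, mem_biUnion, mem_compl, mem_insert, mem_singleton]
  obtain ⟨i, hi, rfl | rfl⟩ := mem_faceEdges.mp he
  · exact ⟨i, notMem_erase i f.1, .inl (by rw [insert_erase hi])⟩
  · exact ⟨i, notMem_erase i f.1, .inr (by rw [insert_erase hi, add_sub_cancel_right])⟩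

theorem card_faceCofaces_le (e : Face d) : #(faceCofaces e) ≤ 2 * (d - #e.1) := by
  calc #(faceCofaces e) ≤ #e.1ᶜ * 2 := card_biUnion_le_card_mul _ _ _ fun _ _ ↦ card_le_two
    _ = 2 * (d - #e.1) := by rw [card_compl, Fintype.card_fin, mul_comm]

/-- The faces other than `f` around the edges in `E`. -/
def facesAround (f : Face d) (E : Finset (Face d)) : Finset (Face d) :=
  E.biUnion fun e ↦ (faceCofaces e).erase f

theorem mem_facesAround {f g e : Face d} {E : Finset (Face d)} (hfg : f ≠ g) (heE : e ∈ E)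
    (heg : e ∈ faceEdges g) : g ∈ facesAround f E :=
  mem_biUnion.mpr ⟨e, heE, mem_erase.mpr ⟨hfg.symm, mem_faceCofaces_of_mem_faceEdges heg⟩⟩

theorem card_facesAround_le {f : Face d} {E : Finset (Face d)} (hE : E ⊆ faceEdges f) :
    #(facesAround f E) ≤ #E * (2 * (d - #f.1) + 1) := by
  refine card_biUnion_le_card_mul _ _ _ fun e he ↦ ?_
  rw [card_erase_of_mem (mem_faceCofaces_of_mem_faceEdges (hE he))]
  have := card_faceCofaces_le e
  have := card_add_one_of_mem_faceEdges (hE he)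
  have := card_finset_fin_le f.1
  omega

/-- The reflection of `f` through the centre of `c`. -/
def reflectFace (c f : Face d) : Face d :=
  (f.1, fun i ↦ 2 * c.2 i + (if i ∈ c.1 then 1 else 0) - (if i ∈ f.1 then 1 else 0) - f.2 i)

theorem doubledCenter_reflectFace (c f : Face d) :
    doubledCenter (reflectFace c f) = 2 • doubledCenter c - doubledCenter f := by
  refine ofLex.injective (funext fun i ↦ ?_)
  simp only [doubledCenter_apply, reflectFace, two_nsmul, ofLex_sub, ofLex_add, Pi.sub_apply,
    Pi.add_apply]
  ring

theorem reflectFace_self (c : Face d) : reflectFace c c = c := by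
  apply doubledCenter_injective
  rw [doubledCenter_reflectFace, two_nsmul, add_sub_cancel_right]

theorem reflectFace_injective (c : Face d) : Function.Injective (reflectFace c) := by
  intro f g h
  apply doubledCenter_injective
  simpa only [doubledCenter_reflectFace, sub_right_inj] using congrArg doubledCenter h

theorem reflectFace_mem_faceEdges (c : Face d) {e f : Face d} (he : e ∈ faceEdges f) :
    reflectFace c e ∈ faceEdges (reflectFace c f) := by
  rw [mem_faceEdges_iff_doubledCenter] at he ⊢
  obtain ⟨i, hi, h | h⟩ := he
  · exact ⟨i, hi, .inr (by rw [doubledCenter_reflectFace, doubledCenter_reflectFace, h]; abel)⟩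
  · exact ⟨i, hi, .inl (by rw [doubledCenter_reflectFace, doubledCenter_reflectFace, h]; abel)⟩

theorem translateFace_injective (t : Fin d → ℤ) : Function.Injective (translateFace t) := by
  intro f g h
  apply doubledCenter_injective
  simpa only [doubledCenter_translateFace, add_left_inj] using congrArg doubledCenter h

theorem translateFace_mem_faceEdges (t : Fin d → ℤ) {e f : Face d} (he : e ∈ faceEdges f) :
    translateFace t e ∈ faceEdges (translateFace t f) := by
  rw [mem_faceEdges_iff_doubledCenter] at he ⊢
  obtain ⟨i, hi, h | h⟩ := he
  · exact ⟨i, hi, .inl (by rw [doubledCenter_translateFace, doubledCenter_translateFace, h]; abel)⟩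
  · exact ⟨i, hi, .inr (by rw [doubledCenter_translateFace, doubledCenter_translateFace, h]; abel)⟩

theorem FaceAdj.map {φ : Face d → Face d} (hφ : Function.Injective φ)
    (hedges : ∀ e f, e ∈ faceEdges f → φ e ∈ faceEdges (φ f)) {f g : Face d} (h : FaceAdj f g) :
    FaceAdj (φ f) (φ g) := by
  obtain ⟨hne, e, hef, heg⟩ := h
  exact ⟨hφ.ne hne, φ e, hedges e f hef, hedges e g heg⟩

/-- The adjacency graph of the `k`-faces of `ℤ^d`. Faces of any other dimension are present as
isolated vertices. -/
def faceGraph (d k : ℕ) : SimpleGraph (Face d) where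
  Adj f g := FaceAdj f g ∧ #f.1 = k ∧ #g.1 = k
  symm := ⟨fun _ _ ⟨⟨hne, e, hef, heg⟩, hf, hg⟩ ↦ ⟨⟨hne.symm, e, heg, hef⟩, hg, hf⟩⟩
  loopless := ⟨fun _ h ↦ h.1.1 rfl⟩

theorem neighborSet_faceGraph_subset (f : Face d) :
    (faceGraph d k).neighborSet f ⊆ facesAround f (faceEdges f) := by
  rintro g ⟨⟨hne, e, hef, heg⟩, -⟩
  exact mem_facesAround hne hef heg

noncomputable instance : (faceGraph d k).LocallyFinite := fun f ↦
  ((facesAround f (faceEdges f)).finite_toSet.subset (neighborSet_faceGraph_subset f)).fintype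

theorem degree_faceGraph_le (f : Face d) :
    (faceGraph d k).degree f ≤ 2 * k * (2 * (d - k) + 1) := by
  by_cases hf : #f.1 = k
  · calc (faceGraph d k).degree f ≤ #(facesAround f (faceEdges f)) :=
          card_le_card fun g hg ↦
            neighborSet_faceGraph_subset f ((SimpleGraph.mem_neighborFinset _ f g).mp hg)
      _ ≤ #(faceEdges f) * (2 * (d - k) + 1) := hf ▸ card_facesAround_le Subset.rfl
      _ ≤ 2 * k * (2 * (d - k) + 1) := Nat.mul_le_mul_right _ (hf ▸ card_faceEdges_le f)
  · have : (faceGraph d k).neighborFinset f = ∅ :=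
      eq_empty_of_forall_notMem fun g hg ↦
        hf ((SimpleGraph.mem_neighborFinset _ f g).mp hg).2.1
    rw [SimpleGraph.degree, this, card_empty]
    exact Nat.zero_le _

theorem card_neighborFinset_sdiff_le_of_adj {f g : Face d} (h : (faceGraph d k).Adj f g) :
    #((faceGraph d k).neighborFinset g \ insert f ((faceGraph d k).neighborFinset f)) ≤
      (2 * k - 1) * (2 * (d - k) + 1) := by
  obtain ⟨⟨-, e, hef, heg⟩, hf, hg⟩ := h
  calc _ ≤ #(facesAround g ((faceEdges g).erase e)) := by
        refine card_le_card fun y hy ↦ ?_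
        rw [Finset.mem_sdiff, mem_insert, SimpleGraph.mem_neighborFinset,
          SimpleGraph.mem_neighborFinset, not_or] at hy
        obtain ⟨⟨⟨hne, e', he'g, he'y⟩, -, hy⟩, hyf, hfy⟩ := hy
        refine mem_facesAround hne (mem_erase.mpr ⟨?_, he'g⟩) he'y
        rintro rfl
        exact hfy ⟨⟨Ne.symm hyf, e', hef, he'y⟩, hf, hy⟩
    _ ≤ #((faceEdges g).erase e) * (2 * (d - k) + 1) :=
        hg ▸ card_facesAround_le (erase_subset e (faceEdges g))
    _ ≤ (2 * k - 1) * (2 * (d - k) + 1) := by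
        rw [card_erase_of_mem heg]
        gcongr
        exact hg ▸ card_faceEdges_le g

theorem adj_reflectFace {c f : Face d} (h : (faceGraph d k).Adj c f) :
    (faceGraph d k).Adj c (reflectFace c f) := by
  refine ⟨?_, h.2⟩
  simpa only [reflectFace_self] using
    h.1.map (reflectFace_injective c) fun _ _ ↦ reflectFace_mem_faceEdges c

open Classical in
/-- The neighbours of `f` whose centre is lexicographically smaller than that of `f`. -/
noncomputable def smallerNeighbors (k : ℕ) (f : Face d) : Finset (Face d) :=
  {g ∈ (faceGraph d k).neighborFinset f | doubledCenter g < doubledCenter f}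

theorem mem_smallerNeighbors {f g : Face d} : g ∈ smallerNeighbors k f ↔
    (faceGraph d k).Adj f g ∧ doubledCenter g < doubledCenter f := by
  simp only [smallerNeighbors, mem_filter, SimpleGraph.mem_neighborFinset]

theorem card_sdiff_smallerNeighbors_le_card (f : Face d) :
    #((faceGraph d k).neighborFinset f \ smallerNeighbors k f) ≤ #(smallerNeighbors k f) := by
  refine card_le_card_of_injOn (reflectFace f) (fun g hg ↦ ?_) (reflectFace_injective f).injOn
  rw [mem_coe, Finset.mem_sdiff, SimpleGraph.mem_neighborFinset, mem_smallerNeighbors] at hg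
  obtain ⟨hadj, hle⟩ := hg
  have hlt : doubledCenter f < doubledCenter g :=
    (not_lt.mp fun h ↦ hle ⟨hadj, h⟩).lt_of_ne (doubledCenter_injective.ne hadj.ne)
  refine mem_smallerNeighbors.mpr ⟨adj_reflectFace hadj, ?_⟩
  rw [doubledCenter_reflectFace, two_nsmul, sub_lt_iff_lt_add]
  gcongr

theorem card_sdiff_smallerNeighbors_le (f : Face d) :
    #((faceGraph d k).neighborFinset f \ smallerNeighbors k f) ≤
      (2 * k - 1) * (2 * (d - k) + 1) := by
  have hsub : smallerNeighbors k f ⊆ (faceGraph d k).neighborFinset f := fun g hg ↦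
    (SimpleGraph.mem_neighborFinset _ f g).mpr (mem_smallerNeighbors.mp hg).1
  have hhalf := card_sdiff_smallerNeighbors_le_card (k := k) f
  have hsum := card_sdiff_add_card_eq_card hsub
  have hdeg : #((faceGraph d k).neighborFinset f) ≤ 2 * (k * (2 * (d - k) + 1)) :=
    (degree_faceGraph_le f).trans_eq (mul_assoc _ _ _)
  calc _ ≤ k * (2 * (d - k) + 1) := by omega
    _ ≤ (2 * k - 1) * (2 * (d - k) + 1) := by gcongr; omega

end Faces

section Polyominoids

open Finset

variable {d k n m : ℕ}

theorem IsXD.preconnected_induce {M : Finset (Face d)} (hM : IsXD d k n M) :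
    ((faceGraph d k).induce (M : Set (Face d))).Preconnected := by
  obtain ⟨-, hdim, hconn⟩ := hM
  rintro ⟨f, hf⟩ ⟨g, hg⟩
  induction hconn f hf g hg with
  | refl => rfl
  | tail _ hbc ih =>
    obtain ⟨hb, hc, hadj⟩ := hbc
    exact (ih hb).trans
      (SimpleGraph.Adj.reachable (G := (faceGraph d k).induce _) ⟨hadj, hdim _ hb, hdim _ hc⟩)

theorem IsXD.image_translateFace {M : Finset (Face d)} (hM : IsXD d k n M) (t : Fin d → ℤ) :
    IsXD d k n (M.image (translateFace t)) := by
  obtain ⟨hcard, hdim, hconn⟩ := hM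
  refine ⟨(card_image_of_injective M (translateFace_injective t)).trans hcard, ?_, ?_⟩
  · exact forall_mem_image.mpr hdim
  · refine forall_mem_image.mpr fun f hf ↦ forall_mem_image.mpr fun g hg ↦ ?_
    refine (hconn f hf g hg).lift (translateFace t) fun a b ⟨ha, hb, hab⟩ ↦
      ⟨mem_image_of_mem _ ha, mem_image_of_mem _ hb, ?_⟩
    exact hab.map (translateFace_injective t) fun _ _ ↦ translateFace_mem_faceEdges t

/-- The face of `M` with the lexicographically least centre is `(S, 0)`: every translation class
has a representative of this form. -/
def IsRootedAt (S : Finset (Fin d)) (M : Finset (Face d)) : Prop :=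
  (S, 0) ∈ M ∧ ∀ f ∈ M, doubledCenter ((S, 0) : Face d) ≤ doubledCenter f

theorem exists_isRootedAt_image_translateFace {M : Finset (Face d)} (hM : M.Nonempty) :
    ∃ f ∈ M, IsRootedAt f.1 (M.image (translateFace (-f.2))) := by
  obtain ⟨f, hf, hmin⟩ := exists_min_image M doubledCenter hM
  have hroot : translateFace (-f.2) f = (f.1, 0) := Prod.ext rfl (add_neg_cancel f.2)
  refine ⟨f, hf, hroot ▸ mem_image_of_mem _ hf, forall_mem_image.mpr fun g hg ↦ ?_⟩
  rw [← hroot, doubledCenter_translateFace, doubledCenter_translateFace]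
  gcongr
  exact hmin g hg

theorem card_isRootedAt_le {S : Finset (Fin d)} {𝓜 : Finset (Finset (Face d))}
    (hXD : ∀ M ∈ 𝓜, IsXD d k (m + 1) M) (hroot : ∀ M ∈ 𝓜, IsRootedAt S M) :
    #𝓜 ≤ ((2 * k - 1) * (2 * (d - k) + 1) * m).choose m := by
  refine card_connected_le_choose (D := insert (S, 0) (smallerNeighbors k (S, 0)))
    (fun _ _ ↦ card_neighborFinset_sdiff_le_of_adj) (mem_insert_self _ _) ?_
    (fun M hM ↦ (hXD M hM).preconnected_induce) (fun M hM ↦ ?_) (fun M hM ↦ (hXD M hM).1)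
  · exact (card_le_card (sdiff_subset_sdiff Subset.rfl (subset_insert _ _))).trans
      (card_sdiff_smallerNeighbors_le (S, 0))
  · obtain ⟨hS, hmin⟩ := hroot M hM
    have hdisj : Disjoint M (smallerNeighbors k (S, 0)) := disjoint_left.mpr fun f hf hlt ↦
      (hmin f hf).not_gt (mem_smallerNeighbors.mp hlt).2
    rw [inter_insert_of_mem hS, disjoint_iff_inter_eq_empty.mp hdisj,
      insert_empty_eq]

theorem xdCount_succ_le (d k m : ℕ) : xdCount d k (m + 1) ≤
    ((2 * k - 1) * (2 * (d - k) + 1) * m).choose m * d.choose k := by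
  have exists_rep : ∀ q : Quot fun A B : {M : Finset (Face d) // IsXD d k (m + 1) M} ↦
      TransEquiv A.val B.val, ∃ S ∈ powersetCard k (univ : Finset (Fin d)),
        ∃ M : {M : Finset (Face d) // IsXD d k (m + 1) M},
          IsRootedAt S M.val ∧ Quot.mk _ M = q := by
    rintro ⟨M, hM⟩
    have hne : M.Nonempty := card_pos.mp (hM.1 ▸ m.succ_pos)
    obtain ⟨f, hf, hroot⟩ := exists_isRootedAt_image_translateFace hne
    exact ⟨f.1, mem_powersetCard.mpr ⟨subset_univ _, hM.2.1 f hf⟩,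
      ⟨_, hM.image_translateFace (-f.2)⟩, hroot, (Quot.sound ⟨-f.2, rfl⟩).symm⟩
  choose root hdim rep hrooted hrep using exists_rep
  have rep_injective : Function.Injective fun q ↦ (rep q).val :=
    Subtype.val_injective.comp (Function.LeftInverse.injective hrep)
  refine natCard_le_of_forall_finset_card_le fun s ↦ ?_
  classical
  have fiber_le : ∀ S ∈ powersetCard k univ, #{q ∈ s | root q = S} ≤
      ((2 * k - 1) * (2 * (d - k) + 1) * m).choose m := by
    intro S _
    rw [← card_image_of_injective _ rep_injective]
    refine card_isRootedAt_le (S := S) (forall_mem_image.mpr fun q _ ↦ (rep q).property)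
      (forall_mem_image.mpr fun q hq ↦ ?_)
    exact (mem_filter.mp hq).2 ▸ hrooted q
  simpa only [card_powersetCard, card_univ, Fintype.card_fin] using
    card_le_mul_card_image_of_maps_to (fun q _ ↦ hdim q) _ fiber_le

end Polyominoids

theorem xdCount_upper_bound (d k : ℕ) (hk : 1 ≤ k) (hkd : k ≤ d) (hd : 2 ≤ d)
    (n : ℕ) (hn : 1 ≤ n) :
    (xdCount d k n : ℝ) ≤
      (d.choose k : ℝ) *
        ((((2 * k - 1) * (2 * (d - k) + 1) : ℕ) : ℝ) ^ ((2 * k - 1) * (2 * (d - k) + 1)) /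
            (((2 * k - 1) * (2 * (d - k) + 1) - 1 : ℕ) : ℝ) ^
              ((2 * k - 1) * (2 * (d - k) + 1) - 1)) ^ (n - 1) := by
  obtain ⟨m, rfl⟩ := Nat.exists_eq_add_one.mpr hn
  have hw : 0 < (2 * k - 1) * (2 * (d - k) + 1) := Nat.mul_pos (by omega) (Nat.succ_pos _)
  set w := (2 * k - 1) * (2 * (d - k) + 1)
  rw [Nat.add_sub_cancel]
  calc (xdCount d k (m + 1) : ℝ) ≤ (w * m).choose m * d.choose k :=
        mod_cast xdCount_succ_le d k m
    _ = d.choose k * (w * m).choose m := mul_comm _ _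
    _ ≤ _ := mul_le_mul_of_nonneg_left (choose_mul_le_div_pow hw m) (Nat.cast_nonneg _)
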